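/- Let (X,d) be a nonempty compact metric space, T : X → X a homeomorphism, and F : X → GL(d,ℝ) continuous. Suppose F admits an extremal norm N. Then for every x ∈ M(F) and every n ≥ 1, sup{N(T^n x, F^{(n)}(x)u) : u ∈ ℝ^d with N(x,u) ≤ 1} = e^{n·β(F)}. In particular, every T-invariant Borel probability measure whose support is contained in M(F) is Lyapunov maximizing. (Proposition 6.2 of the paper.) -/

import Mathlib

/-- Euclidean operator norm of a `d × d` real matrix. -/
noncomputable def matNorm {d : ℕ} (A : Matrix (Fin d) (Fin d) ℝ) : ℝ :=
  ‖LinearMap.toContinuousLinearMap (Matrix.toEuclideanLin A)‖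

/-- Cocycle products: `cocycle T F n x = F(T^{n-1}x) ⬝ ⋯ ⬝ F(Tx) ⬝ F(x)`. -/
def cocycle {X : Type*} (T : X → X) {d : ℕ} (F : X → Matrix (Fin d) (Fin d) ℝ) :
    ℕ → X → Matrix (Fin d) (Fin d) ℝ
  | 0, _ => 1
  | n + 1, x => cocycle T F n (T x) * F x

/-- `μ` is a `T`-invariant Borel probability measure. -/
def IsInvProb {X : Type*} [MeasurableSpace X] (T : X → X)
    (μ : MeasureTheory.Measure X) : Prop :=
  MeasureTheory.IsProbabilityMeasure μ ∧ μ.map T = μ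

/-- Top Lyapunov exponent `χ₁(F, μ)` of the cocycle `(T,F)` w.r.t. the measure `μ`. -/
noncomputable def lyapExp {X : Type*} [MeasurableSpace X] (T : X → X) {d : ℕ}
    (F : X → Matrix (Fin d) (Fin d) ℝ) (μ : MeasureTheory.Measure X) : ℝ :=
  ⨅ n : ℕ, (1 / (n + 1 : ℝ)) * ∫ x, Real.log (matNorm (cocycle T F (n + 1) x)) ∂μ

/-- Maximal Lyapunov exponent `β(F)`. -/
noncomputable def maxLyap {X : Type*} [MeasurableSpace X] (T : X → X) {d : ℕ}
    (F : X → Matrix (Fin d) (Fin d) ℝ) : ℝ :=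
  sSup {r : ℝ | ∃ μ : MeasureTheory.Measure X, IsInvProb T μ ∧ r = lyapExp T F μ}

/-- Topological support of a measure. -/
def measSupport {X : Type*} [TopologicalSpace X] [MeasurableSpace X]
    (μ : MeasureTheory.Measure X) : Set X :=
  {x | ∀ U : Set X, IsOpen U → x ∈ U → 0 < μ U}

/-- The Mather set `M(F)`: union of supports of all Lyapunov maximizing measures. -/
def mather {X : Type*} [TopologicalSpace X] [MeasurableSpace X] (T : X → X) {d : ℕ}
    (F : X → Matrix (Fin d) (Fin d) ℝ) : Set X :=
  ⋃ μ ∈ {μ : MeasureTheory.Measure X | IsInvProb T μ ∧ lyapExp T F μ = maxLyap T F},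
    measSupport μ

open MeasureTheory Filter Topology

/-- Euclidean norm on `Fin d → ℝ`. -/
noncomputable def euNorm {d : ℕ} (u : Fin d → ℝ) : ℝ := ‖(WithLp.toLp 2 u : EuclideanSpace ℝ (Fin d))‖

lemma euNorm_nonneg {d : ℕ} (u : Fin d → ℝ) : 0 ≤ euNorm u := norm_nonneg _

lemma euNorm_pos {d : ℕ} {u : Fin d → ℝ} (h : u ≠ 0) : 0 < euNorm u := by
  unfold euNorm
  rw [norm_pos_iff]
  intro h'
  exact h (by simpa using h')

lemma euNorm_smul {d : ℕ} (c : ℝ) (u : Fin d → ℝ) : euNorm (c • u) = |c| * euNorm u := by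
  unfold euNorm
  rw [WithLp.toLp_smul, norm_smul, Real.norm_eq_abs]

lemma euNorm_zero {d : ℕ} : euNorm (0 : Fin d → ℝ) = 0 := by
  simp [euNorm]

lemma euNorm_cont {d : ℕ} : Continuous (euNorm : (Fin d → ℝ) → ℝ) := by
  unfold euNorm
  exact continuous_norm.comp (PiLp.continuous_toLp 2 _)

lemma euNorm_mulVec_le {d : ℕ} (A : Matrix (Fin d) (Fin d) ℝ) (u : Fin d → ℝ) :
    euNorm (A.mulVec u) ≤ matNorm A * euNorm u := by
  have := (LinearMap.toContinuousLinearMap (Matrix.toEuclideanLin A)).le_opNorm (WithLp.toLp 2 u)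
  simpa [euNorm, matNorm, Matrix.toLpLin_apply] using this

lemma matNorm_le {d : ℕ} (A : Matrix (Fin d) (Fin d) ℝ) (M : ℝ) (hM : 0 ≤ M)
    (h : ∀ u, euNorm (A.mulVec u) ≤ M * euNorm u) : matNorm A ≤ M := by
  unfold matNorm
  refine ContinuousLinearMap.opNorm_le_bound _ hM fun x => ?_
  have := h (WithLp.ofLp x)
  simpa [euNorm, Matrix.toLpLin_apply] using this

lemma matNorm_nonneg {d : ℕ} (A : Matrix (Fin d) (Fin d) ℝ) : 0 ≤ matNorm A := norm_nonneg _

lemma matNorm_cont {d : ℕ} : Continuous (matNorm : Matrix (Fin d) (Fin d) ℝ → ℝ) := by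
  have : Continuous ((LinearMap.toContinuousLinearMap.toLinearMap.comp
      (Matrix.toEuclideanLin (𝕜 := ℝ) (m := Fin d) (n := Fin d)).toLinearMap)) :=
    LinearMap.continuous_of_finiteDimensional _
  exact continuous_norm.comp this

lemma matNorm_mul_le {d : ℕ} (A B : Matrix (Fin d) (Fin d) ℝ) :
    matNorm (A * B) ≤ matNorm A * matNorm B := by
  refine matNorm_le _ _ (mul_nonneg (matNorm_nonneg _) (matNorm_nonneg _)) fun u => ?_
  rw [← Matrix.mulVec_mulVec, mul_assoc]
  exact (euNorm_mulVec_le _ _).trans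
    (mul_le_mul_of_nonneg_left (euNorm_mulVec_le _ _) (matNorm_nonneg _))

lemma cocycle_add {X : Type*} (T : X → X) {d : ℕ} (F : X → Matrix (Fin d) (Fin d) ℝ) (m n : ℕ)
    (x : X) : cocycle T F (m + n) x = cocycle T F m (T^[n] x) * cocycle T F n x := by
  induction n generalizing x with
  | zero => simp [cocycle]
  | succ n ih =>
    rw [← add_assoc]
    simp only [cocycle, Function.iterate_succ, Function.comp]
    rw [ih, mul_assoc]

lemma cocycle_cont {X : Type*} [TopologicalSpace X] (T : X → X) (hT : Continuous T) {d : ℕ}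
    (F : X → Matrix (Fin d) (Fin d) ℝ) (hF : Continuous F) (n : ℕ) :
    Continuous (cocycle T F n) := by
  induction n with
  | zero => exact continuous_const
  | succ n ih => exact (ih.comp hT).matrix_mul hF

section homog
variable {X : Type*} [TopologicalSpace X] [CompactSpace X] {d : ℕ}

lemma sphere_compact : IsCompact {u : Fin d → ℝ | euNorm u = 1} := by
  have h : {u : Fin d → ℝ | euNorm u = 1} =
      WithLp.ofLp '' (Metric.sphere (0 : EuclideanSpace ℝ (Fin d)) 1) := by
    ext u
    simp only [Set.mem_ofPred_eq, Set.mem_image, mem_sphere_zero_iff_norm]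
    constructor
    · intro h
      exact ⟨WithLp.toLp 2 u, h, rfl⟩
    · rintro ⟨v, hv, rfl⟩
      exact hv
  rw [h]
  exact (isCompact_sphere _ _).image (PiLp.continuous_ofLp 2 _)

lemma homog_reduce (u : Fin d → ℝ) (hu : u ≠ 0) :
    ∃ v : Fin d → ℝ, euNorm v = 1 ∧ v ≠ 0 ∧ u = euNorm u • v := by
  have hp := euNorm_pos hu
  refine ⟨(euNorm u)⁻¹ • u, ?_, ?_, ?_⟩
  · rw [euNorm_smul, abs_of_pos (inv_pos.2 hp), inv_mul_cancel₀ hp.ne']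
  · exact smul_ne_zero (inv_ne_zero hp.ne') hu
  · rw [smul_smul, mul_inv_cancel₀ hp.ne', one_smul]

lemma homog_lower (G : X → (Fin d → ℝ) → ℝ)
    (hc : Continuous fun p : X × (Fin d → ℝ) => G p.1 p.2)
    (hs : ∀ (x : X) (c : ℝ) (u : Fin d → ℝ), G x (c • u) = |c| * G x u)
    (hp : ∀ (x : X) (u : Fin d → ℝ), u ≠ 0 → 0 < G x u) :
    ∃ δ : ℝ, 0 < δ ∧ ∀ x u, δ * euNorm u ≤ G x u := by
  have hK : IsCompact ((Set.univ : Set X) ×ˢ {u : Fin d → ℝ | euNorm u = 1}) :=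
    isCompact_univ.prod sphere_compact
  obtain ⟨δ, hδ, h⟩ : ∃ δ : ℝ, 0 < δ ∧
      ∀ p ∈ ((Set.univ : Set X) ×ˢ {u : Fin d → ℝ | euNorm u = 1}), δ ≤ G p.1 p.2 := by
    refine hK.exists_forall_le' hc.continuousOn (a := 0) ?_
    rintro ⟨x, u⟩ ⟨-, hu⟩
    refine hp x u ?_
    rintro rfl
    simp [euNorm_zero] at hu
  refine ⟨δ, hδ, fun x u => ?_⟩
  by_cases hu : u = 0
  · subst hu
    have := hs x 0 0
    simp at this
    simp [euNorm_zero, this]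
  · obtain ⟨v, hv, -, e⟩ := homog_reduce u hu
    have h1 : G x u = euNorm u * G x v := by
      conv_lhs => rw [e]
      rw [hs, abs_of_nonneg (euNorm_nonneg _)]
    rw [h1, mul_comm]
    exact mul_le_mul_of_nonneg_left (h (x, v) ⟨trivial, hv⟩) (euNorm_nonneg _)

lemma homog_upper (G : X → (Fin d → ℝ) → ℝ)
    (hc : Continuous fun p : X × (Fin d → ℝ) => G p.1 p.2)
    (hs : ∀ (x : X) (c : ℝ) (u : Fin d → ℝ), G x (c • u) = |c| * G x u) :
    ∃ C : ℝ, 0 < C ∧ ∀ x u, G x u ≤ C * euNorm u := by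
  have hK : IsCompact ((Set.univ : Set X) ×ˢ {u : Fin d → ℝ | euNorm u = 1}) :=
    isCompact_univ.prod sphere_compact
  obtain ⟨C, h⟩ := hK.bddAbove_image hc.continuousOn
  refine ⟨max C 1, by positivity, fun x u => ?_⟩
  by_cases hu : u = 0
  · subst hu
    have := hs x 0 0
    simp at this
    simp [euNorm_zero, this]
  · obtain ⟨v, hv, -, e⟩ := homog_reduce u hu
    have h1 : G x u = euNorm u * G x v := by
      conv_lhs => rw [e]
      rw [hs, abs_of_nonneg (euNorm_nonneg _)]
    rw [h1, mul_comm]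
    refine mul_le_mul_of_nonneg_right (le_trans ?_ (le_max_left _ _)) (euNorm_nonneg _)
    exact h ⟨(x, v), ⟨trivial, hv⟩, rfl⟩

end homog

lemma exists_euNorm_pos {d : ℕ} (hd : 1 ≤ d) : ∃ u : Fin d → ℝ, 0 < euNorm u := by
  refine ⟨fun _ => 1, euNorm_pos fun h => ?_⟩
  have := congrFun h ⟨0, hd⟩
  simp at this

section main
variable {X : Type*} [MetricSpace X] [CompactSpace X] {d : ℕ}

/-- Uniform exponential lower bound for the norms of products. -/
lemma matNorm_cocycle_lower (T : X ≃ₜ X) (hd : 1 ≤ d) (F : X → Matrix (Fin d) (Fin d) ℝ)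
    (hFcont : Continuous F) (hFunit : ∀ x, IsUnit (F x)) :
    ∃ δ : ℝ, 0 < δ ∧ ∀ n x, δ ^ n ≤ matNorm (cocycle T F n x) := by
  obtain ⟨δ, hδ, h⟩ := homog_lower (fun x u => euNorm ((F x).mulVec u))
    (euNorm_cont.comp ((hFcont.comp continuous_fst).matrix_mulVec continuous_snd))
    (fun x c u => by rw [Matrix.mulVec_smul, euNorm_smul])
    (fun x u hu => euNorm_pos fun h0 => hu (by
      apply Matrix.mulVec_injective_of_isUnit (hFunit x)
      simpa using h0))
  refine ⟨δ, hδ, fun n x => ?_⟩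
  have key : ∀ n x u, δ ^ n * euNorm u ≤ euNorm ((cocycle T F n x).mulVec u) := by
    intro n
    induction n with
    | zero => intro x u; simp [cocycle]
    | succ n ih =>
      intro x u
      simp only [cocycle]
      rw [← Matrix.mulVec_mulVec, pow_succ, mul_assoc]
      exact (mul_le_mul_of_nonneg_left (h x u) (by positivity)).trans (ih _ _)
  obtain ⟨u, hu⟩ := exists_euNorm_pos hd
  exact le_of_mul_le_mul_right ((key n x u).trans (euNorm_mulVec_le _ _)) hu

variable [MeasurableSpace X] [BorelSpace X]

lemma log_int (T : X ≃ₜ X) (hd : 1 ≤ d) (F : X → Matrix (Fin d) (Fin d) ℝ)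
    (hFcont : Continuous F) (hFunit : ∀ x, IsUnit (F x)) (μ : Measure X)
    [IsProbabilityMeasure μ] (n : ℕ) :
    Integrable (fun x => Real.log (matNorm (cocycle T F n x))) μ := by
  obtain ⟨δ, hδ, h⟩ := matNorm_cocycle_lower T hd F hFcont hFunit
  have hc : Continuous (fun x => Real.log (matNorm (cocycle T F n x))) :=
    (matNorm_cont.comp (cocycle_cont T T.continuous F hFcont n)).log
      fun x => ((pow_pos hδ n).trans_le (h n x)).ne'
  exact hc.integrable_of_hasCompactSupport (HasCompactSupport.of_compactSpace _)

lemma lyap_bdd (T : X ≃ₜ X) (hd : 1 ≤ d) (F : X → Matrix (Fin d) (Fin d) ℝ)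
    (hFcont : Continuous F) (hFunit : ∀ x, IsUnit (F x)) (μ : Measure X)
    [IsProbabilityMeasure μ] :
    BddBelow (Set.range fun n : ℕ => (1 / (n + 1 : ℝ)) *
      ∫ x, Real.log (matNorm (cocycle T F (n + 1) x)) ∂μ) := by
  obtain ⟨δ, hδ, h⟩ := matNorm_cocycle_lower T hd F hFcont hFunit
  refine ⟨Real.log δ, ?_⟩
  rintro _ ⟨n, rfl⟩
  have h1 : ∫ x : X, ((n + 1 : ℕ) : ℝ) * Real.log δ ∂μ ≤
      ∫ x, Real.log (matNorm (cocycle T F (n + 1) x)) ∂μ := by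
    refine integral_mono (integrable_const _) (log_int T hd F hFcont hFunit μ _) fun x => ?_
    have := Real.log_le_log (pow_pos hδ (n + 1)) (h (n + 1) x)
    rwa [Real.log_pow] at this
  simp only [integral_const, probReal_univ, one_smul] at h1
  push_cast at h1
  have hn : (0 : ℝ) < n + 1 := by positivity
  beta_reduce
  rw [one_div, ← div_eq_inv_mul, le_div_iff₀ hn]
  linarith

lemma lyap_le (T : X ≃ₜ X) (hd : 1 ≤ d) (F : X → Matrix (Fin d) (Fin d) ℝ)
    (hFcont : Continuous F) (hFunit : ∀ x, IsUnit (F x)) (μ : Measure X)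
    [IsProbabilityMeasure μ] (n : ℕ) (hn : 1 ≤ n) :
    n * lyapExp T F μ ≤ ∫ x, Real.log (matNorm (cocycle T F n x)) ∂μ := by
  obtain ⟨m, rfl⟩ : ∃ m, n = m + 1 := ⟨n - 1, by omega⟩
  have := ciInf_le (lyap_bdd T hd F hFcont hFunit μ) m
  have hm : (0 : ℝ) < m + 1 := by positivity
  beta_reduce at this
  rw [one_div, ← div_eq_inv_mul, le_div_iff₀ hm] at this
  push_cast
  unfold lyapExp
  simp only [one_div] at this ⊢
  linarith

lemma mp_iter (T : X ≃ₜ X) (μ : Measure X) (h : μ.map T = μ) (n : ℕ) :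
    MeasurePreserving ((T : X → X)^[n]) μ μ :=
  MeasurePreserving.iterate ⟨T.continuous.measurable, h⟩ n

lemma integral_iter (T : X ≃ₜ X) (μ : Measure X) (h : μ.map T = μ) (n : ℕ) (φ : X → ℝ)
    (hφ : Integrable φ μ) : ∫ x, φ ((T : X → X)^[n] x) ∂μ = ∫ x, φ x ∂μ := by
  have hm := mp_iter T μ h n
  have := integral_map (μ := μ) hm.measurable.aemeasurable (f := φ)
    (by rw [hm.map_eq]; exact hφ.aestronglyMeasurable)
  rw [hm.map_eq] at this
  exact this.symm

/-- If `φ` controls the one-block growth, its integral bounds the sum. -/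
lemma integral_block (T : X ≃ₜ X) (μ : Measure X) (h : μ.map T = μ) (n k : ℕ) (φ : X → ℝ)
    (hφ : Integrable φ μ) :
    Integrable (fun x => ∑ j ∈ Finset.range k, φ ((T : X → X)^[n * j] x)) μ ∧
    ∫ x, ∑ j ∈ Finset.range k, φ ((T : X → X)^[n * j] x) ∂μ = k * ∫ x, φ x ∂μ := by
  have hi : ∀ j ∈ Finset.range k, Integrable (fun x => φ ((T : X → X)^[n * j] x)) μ :=
    fun j _ => (mp_iter T μ h (n * j)).integrable_comp_of_integrable hφ
  refine ⟨integrable_finsetSum _ hi, ?_⟩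
  rw [integral_finsetSum _ hi]
  simp [integral_iter T μ h _ φ hφ]

/-- archimedean argument -/
lemma arch {a b c : ℝ} (h : ∀ k : ℕ, 1 ≤ k → k * a ≤ c + k * b) : a ≤ b := by
  by_contra! hab
  obtain ⟨k, hk⟩ := exists_nat_gt (c / (a - b))
  rw [div_lt_iff₀ (by linarith)] at hk
  have h1 := h (k + 1) (by omega)
  push_cast at h1
  nlinarith

lemma block_bound (T : X ≃ₜ X) (hd : 1 ≤ d) (F : X → Matrix (Fin d) (Fin d) ℝ)
    (hFcont : Continuous F) (hFunit : ∀ x, IsUnit (F x))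
    (N : X → (Fin d → ℝ) → ℝ)
    (hNcont : Continuous fun p : X × (Fin d → ℝ) => N p.1 p.2)
    (hNsmul : ∀ (x : X) (c : ℝ) (u : Fin d → ℝ), N x (c • u) = |c| * N x u)
    (hNpos : ∀ (x : X) (u : Fin d → ℝ), u ≠ 0 → 0 < N x u)
    (μ : Measure X) (hμ : IsInvProb T μ) (n : ℕ) (hn : 1 ≤ n) (φ : X → ℝ) (hφ : Integrable φ μ)
    (hφN : ∀ x u, N ((T : X → X)^[n] x) ((cocycle T F n x).mulVec u) ≤ Real.exp (φ x) * N x u) :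
    n * lyapExp T F μ ≤ ∫ x, φ x ∂μ := by
  have := hμ.1
  obtain ⟨c, hc, hlow⟩ := homog_lower N hNcont hNsmul hNpos
  obtain ⟨C, hC, hup⟩ := homog_upper N hNcont hNsmul
  obtain ⟨δ, hδ, hδn⟩ := matNorm_cocycle_lower T hd F hFcont hFunit
  have hit : ∀ k x u, N ((T : X → X)^[n * k] x) ((cocycle T F (n * k) x).mulVec u) ≤
      Real.exp (∑ j ∈ Finset.range k, φ ((T : X → X)^[n * j] x)) * N x u := by
    intro k
    induction k with
    | zero => intro x u; simp [cocycle]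
    | succ k ih =>
      intro x u
      rw [Nat.mul_succ, add_comm, cocycle_add, Function.iterate_add_apply, ← Matrix.mulVec_mulVec,
        Finset.sum_range_succ, add_comm, Real.exp_add, mul_assoc]
      exact (hφN _ _).trans (mul_le_mul_of_nonneg_left (ih x u) (Real.exp_pos _).le)
  refine arch (c := Real.log (C / c)) fun k hk => ?_
  have hnk : 1 ≤ n * k := Nat.mul_pos hn hk
  have h1 := lyap_le T hd F hFcont hFunit μ (n * k) hnk
  obtain ⟨hi, he⟩ := integral_block T μ hμ.2 n k φ hφ
  have h2 : ∫ x, Real.log (matNorm (cocycle T F (n * k) x)) ∂μ ≤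
      ∫ x, (Real.log (C / c) + ∑ j ∈ Finset.range k, φ ((T : X → X)^[n * j] x)) ∂μ := by
    refine integral_mono (log_int T hd F hFcont hFunit μ _) ((integrable_const _).add hi)
      fun x => ?_
    beta_reduce
    rw [← Real.log_exp (∑ j ∈ Finset.range k, φ ((T : X → X)^[n * j] x)),
      ← Real.log_mul (by positivity) (Real.exp_pos _).ne']
    refine Real.log_le_log ((pow_pos hδ _).trans_le (hδn _ x)) ?_
    refine matNorm_le _ _ (by positivity) fun u => ?_
    have := ((hlow _ _).trans (hit k x u)).trans
      (mul_le_mul_of_nonneg_left (hup x u) (Real.exp_pos _).le)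
    rw [div_mul_eq_mul_div, div_mul_eq_mul_div, le_div_iff₀ hc]
    linarith
  rw [integral_add (integrable_const _) hi, he] at h2
  simp only [integral_const, probReal_univ, one_smul] at h2
  push_cast at h1
  linarith

end main

/-- **Proposition 6.2** of Bochi–Garibaldi, "Extremal Norms for Fiber-Bunched Cocycles":
if `F` admits an extremal norm `N`, then the `N`-operator norm of `F⁽ⁿ⁾(x)` equals
`e^{n β(F)}` for every `x` in the Mather set and every `n ≥ 1`; in particular, every
invariant measure supported inside the Mather set is Lyapunov maximizing. -/
theorem extremal_norm_calibrated_on_mather {X : Type*} [MetricSpace X]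
    [CompactSpace X] [Nonempty X] [MeasurableSpace X] [BorelSpace X]
    (T : X ≃ₜ X) (d : ℕ) (hd : 1 ≤ d) (F : X → Matrix (Fin d) (Fin d) ℝ)
    (hFcont : Continuous F) (hFunit : ∀ x, IsUnit (F x))
    (N : X → (Fin d → ℝ) → ℝ)
    (hNcont : Continuous fun p : X × (Fin d → ℝ) => N p.1 p.2)
    (hNadd : ∀ x u v, N x (u + v) ≤ N x u + N x v)
    (hNsmul : ∀ (x : X) (c : ℝ) (u : Fin d → ℝ), N x (c • u) = |c| * N x u)
    (hNpos : ∀ (x : X) (u : Fin d → ℝ), u ≠ 0 → 0 < N x u)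
    (hNext : ∀ (x : X) (u : Fin d → ℝ),
      N (T x) ((F x).mulVec u) ≤ Real.exp (maxLyap (T : X → X) F) * N x u) :
    (∀ x ∈ mather (T : X → X) F, ∀ n : ℕ, 1 ≤ n →
      sSup {r : ℝ | ∃ u : Fin d → ℝ, N x u ≤ 1 ∧
          r = N ((T : X → X)^[n] x) ((cocycle (T : X → X) F n x).mulVec u)} =
        Real.exp (n * maxLyap (T : X → X) F)) ∧
    ∀ μ : MeasureTheory.Measure X, IsInvProb (T : X → X) μ →
      measSupport μ ⊆ mather (T : X → X) F →
      lyapExp (T : X → X) F μ = maxLyap (T : X → X) F := by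
  set β := maxLyap (T : X → X) F with hβ
  have hN0 : ∀ x, N x 0 = 0 := fun x => by simpa using hNsmul x 0 0
  have hit : ∀ n x u, N ((T : X → X)^[n] x) ((cocycle T F n x).mulVec u) ≤
      Real.exp (n * β) * N x u := by
    intro n
    induction n with
    | zero => intro x u; simp [cocycle]
    | succ n ih =>
      intro x u
      rw [add_comm n 1, cocycle_add, Function.iterate_add_apply, ← Matrix.mulVec_mulVec]
      push_cast
      rw [add_mul, one_mul, Real.exp_add, mul_assoc]
      refine le_trans ?_ (mul_le_mul_of_nonneg_left (ih x u) (Real.exp_pos _).le)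
      simpa [cocycle] using hNext ((T : X → X)^[n] x) ((cocycle T F n x).mulVec u)
  have main : ∀ x ∈ mather (T : X → X) F, ∀ n : ℕ, 1 ≤ n →
      sSup {r : ℝ | ∃ u : Fin d → ℝ, N x u ≤ 1 ∧
          r = N ((T : X → X)^[n] x) ((cocycle (T : X → X) F n x).mulVec u)} =
        Real.exp (n * β) := by
    intro x hx n hn
    have hmem : ∀ r ∈ {r : ℝ | ∃ u : Fin d → ℝ, N x u ≤ 1 ∧
          r = N ((T : X → X)^[n] x) ((cocycle (T : X → X) F n x).mulVec u)},
        r ≤ Real.exp (n * β) := by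
      rintro r ⟨u, hu, rfl⟩
      exact (hit n x u).trans (mul_le_of_le_one_right (Real.exp_pos _).le hu)
    have h0 : (0 : ℝ) ∈ {r : ℝ | ∃ u : Fin d → ℝ, N x u ≤ 1 ∧
          r = N ((T : X → X)^[n] x) ((cocycle (T : X → X) F n x).mulVec u)} :=
      ⟨0, by simp [hN0], by simp [hN0]⟩
    refine le_antisymm (csSup_le ⟨0, h0⟩ hmem) ?_
    by_contra! hlt
    set s := sSup {r : ℝ | ∃ u : Fin d → ℝ, N x u ≤ 1 ∧
          r = N ((T : X → X)^[n] x) ((cocycle (T : X → X) F n x).mulVec u)} with hs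
    have hbdd : BddAbove {r : ℝ | ∃ u : Fin d → ℝ, N x u ≤ 1 ∧
          r = N ((T : X → X)^[n] x) ((cocycle (T : X → X) F n x).mulVec u)} := ⟨_, hmem⟩
    have hs0 : 0 ≤ s := le_csSup hbdd h0
    obtain ⟨t, hst, ht⟩ := exists_between hlt
    have ht0 : 0 < t := hs0.trans_lt hst
    -- the strict inequality at `x`
    have hstrict : ∀ u : Fin d → ℝ, u ≠ 0 →
        N ((T : X → X)^[n] x) ((cocycle (T : X → X) F n x).mulVec u) < t * N x u := by
      intro u hu
      have hp := hNpos x u hu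
      have h1 : N ((T : X → X)^[n] x) ((cocycle (T : X → X) F n x).mulVec ((N x u)⁻¹ • u)) ≤ s := by
        refine le_csSup hbdd ⟨_, ?_, rfl⟩
        rw [hNsmul, abs_of_pos (inv_pos.2 hp), inv_mul_cancel₀ hp.ne']
      rw [Matrix.mulVec_smul, hNsmul, abs_of_pos (inv_pos.2 hp), inv_mul_le_iff₀ hp] at h1
      nlinarith
    -- tube lemma
    have hopen : IsOpen {p : X × (Fin d → ℝ) |
        N ((T : X → X)^[n] p.1) ((cocycle (T : X → X) F n p.1).mulVec p.2) < t * N p.1 p.2} := by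
      refine isOpen_lt ?_ (continuous_const.mul hNcont)
      refine hNcont.comp (((T.continuous.iterate n).comp continuous_fst).prodMk ?_)
      exact ((cocycle_cont T T.continuous F hFcont n).comp continuous_fst).matrix_mulVec
        continuous_snd
    obtain ⟨U, V, hU, -, hxU, hV, hUV⟩ := generalized_tube_lemma (isCompact_singleton (x := x))
      (sphere_compact (d := d)) hopen (by
        rintro ⟨y, u⟩ ⟨hy, hu⟩
        obtain rfl : y = x := hy
        refine hstrict u ?_
        rintro rfl
        simp [euNorm_zero] at hu)
    have hUb : ∀ y ∈ U, ∀ u, N ((T : X → X)^[n] y) ((cocycle (T : X → X) F n y).mulVec u) ≤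
        t * N y u := by
      intro y hy u
      by_cases hu : u = 0
      · subst hu; simp [hN0]
      · obtain ⟨v, hv, -, e⟩ := homog_reduce u hu
        have h1 := hUV (Set.mk_mem_prod hy (hV hv))
        simp only [Set.mem_ofPred_eq] at h1
        rw [e, Matrix.mulVec_smul, hNsmul, hNsmul, mul_left_comm]
        exact mul_le_mul_of_nonneg_left h1.le (abs_nonneg _)
    obtain ⟨μ, ⟨hμ, hmax⟩, hxμ⟩ : ∃ μ : MeasureTheory.Measure X,
        (IsInvProb T μ ∧ lyapExp T F μ = maxLyap T F) ∧ x ∈ measSupport μ := by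
      simpa [mather] using hx
    have := hμ.1
    have hUpos : 0 < μ U := hxμ U hU (hxU rfl)
    have hI : Integrable (U.indicator fun _ => Real.log t - n * β) μ :=
      (integrable_const _).indicator hU.measurableSet
    have hb := block_bound T hd F hFcont hFunit N hNcont hNsmul hNpos μ hμ n hn
      (fun y => n * β + U.indicator (fun _ => Real.log t - n * β) y)
      ((integrable_const _).add hI) (by
        intro y u
        by_cases hy : y ∈ U
        · have : Real.exp (n * β + U.indicator (fun _ => Real.log t - n * β) y) = t := by
            rw [Set.indicator_of_mem hy, add_sub_cancel, Real.exp_log ht0]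
          rw [this]
          exact hUb y hy u
        · rw [Set.indicator_of_notMem hy, add_zero]
          exact hit n y u)
    rw [integral_add (integrable_const _) hI, integral_indicator_const _ hU.measurableSet, hmax,
      ← hβ] at hb
    simp only [integral_const, probReal_univ, one_smul, smul_eq_mul] at hb
    have hlog : Real.log t < n * β := by
      rw [Real.log_lt_iff_lt_exp ht0]; exact ht
    have hUr : 0 < μ.real U := by
      rw [measureReal_def]
      exact ENNReal.toReal_pos hUpos.ne' (measure_ne_top _ _)
    nlinarith
  refine ⟨main, fun μ hμ hsup => ?_⟩
  have := hμ.1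
  refine le_antisymm ?_ ?_
  · have := block_bound T hd F hFcont hFunit N hNcont hNsmul hNpos μ hμ 1 le_rfl
      (fun _ => β) (integrable_const _) (fun x u => by simpa using hit 1 x u)
    simpa using this
  · obtain ⟨c, hc, hlow⟩ := homog_lower N hNcont hNsmul hNpos
    obtain ⟨C, hC, hup⟩ := homog_upper N hNcont hNsmul
    obtain ⟨δ, hδ, hδn⟩ := matNorm_cocycle_lower T hd F hFcont hFunit
    -- a.e. point is in the support
    have hae : ∀ᵐ x ∂μ, x ∈ mather (T : X → X) F := by
      have : ∀ᵐ x ∂μ, x ∈ μ.support := Measure.support_mem_ae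
      filter_upwards [this] with x hx
      refine hsup fun U hU hxU => ?_
      exact ((Measure.mem_support_iff_forall _).1 hx) U (hU.mem_nhds hxU)
    have hpt : ∀ x ∈ mather (T : X → X) F, ∀ n : ℕ, 1 ≤ n →
        n * β - Real.log (C / c) ≤ Real.log (matNorm (cocycle T F n x)) := by
      intro x hx n hn
      have hp := (pow_pos hδ _).trans_le (hδn n x)
      have h1 : Real.exp (n * β) ≤ (C / c) * matNorm (cocycle T F n x) := by
        rw [← main x hx n hn]
        refine csSup_le ⟨_, 0, by simp [hN0], rfl⟩ ?_
        rintro r ⟨u, hu, rfl⟩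
        have h2 : euNorm u ≤ 1 / c := by
          rw [le_div_iff₀ hc]; linarith [hlow x u]
        calc _ ≤ C * (matNorm (cocycle T F n x) * euNorm u) :=
              (hup _ _).trans (mul_le_mul_of_nonneg_left (euNorm_mulVec_le _ _) hC.le)
          _ ≤ C * (matNorm (cocycle T F n x) * (1 / c)) := by gcongr
          _ = _ := by ring
      have h3 := Real.log_le_log (Real.exp_pos _) h1
      rw [Real.log_exp, Real.log_mul (by positivity) hp.ne'] at h3
      linarith
    have hint : ∀ n : ℕ, 1 ≤ n →
        n * β - Real.log (C / c) ≤ ∫ x, Real.log (matNorm (cocycle T F n x)) ∂μ := by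
      intro n hn
      have : ∫ x : X, (n * β - Real.log (C / c)) ∂μ ≤
          ∫ x, Real.log (matNorm (cocycle T F n x)) ∂μ := by
        refine integral_mono_ae (integrable_const _) (log_int T hd F hFcont hFunit μ _) ?_
        filter_upwards [hae] with x hx using hpt x hx n hn
      simpa using this
    refine le_ciInf fun m => ?_
    have hm : (0 : ℝ) < m + 1 := by positivity
    rw [one_div, ← div_eq_inv_mul, le_div_iff₀ hm]
    refine arch (c := Real.log (C / c)) fun k hk => ?_
    have h1 := hint ((m + 1) * k) (Nat.mul_pos (Nat.succ_pos m) hk)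
    have hφ := log_int T hd F hFcont hFunit μ (m + 1)
    obtain ⟨hi, he⟩ := integral_block T μ hμ.2 (m + 1) k _ hφ
    have hsub : ∀ k x, Real.log (matNorm (cocycle T F ((m + 1) * k) x)) ≤
        Real.log (matNorm (cocycle T F 0 x)) + ∑ j ∈ Finset.range k,
          Real.log (matNorm (cocycle T F (m + 1) ((T : X → X)^[(m + 1) * j] x))) := by
      intro k x
      induction k with
      | zero => simp
      | succ k ih =>
        rw [Nat.mul_succ, add_comm ((m + 1) * k), cocycle_add, Finset.sum_range_succ, ← add_assoc]
        have hp1 := (pow_pos hδ _).trans_le (hδn (m + 1) ((T : X → X)^[(m + 1) * k] x))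
        have hp2 := (pow_pos hδ _).trans_le (hδn ((m + 1) * k) x)
        have hp3 := (pow_pos hδ _).trans_le (hδn ((m + 1) + (m + 1) * k) x)
        rw [cocycle_add] at hp3
        have h4 := Real.log_le_log hp3 (matNorm_mul_le _ _)
        rw [Real.log_mul hp1.ne' hp2.ne'] at h4
        linarith
    have hz : ∀ x, Real.log (matNorm (cocycle T F 0 x)) ≤ 0 := by
      intro x
      refine Real.log_nonpos (matNorm_nonneg _) (matNorm_le _ _ zero_le_one fun u => ?_)
      simp [cocycle]
    have h2 : ∫ x, Real.log (matNorm (cocycle T F ((m + 1) * k) x)) ∂μ ≤ _ :=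
      integral_mono (log_int T hd F hFcont hFunit μ _) hi
        fun x => (hsub k x).trans (by linarith [hz x])
    rw [he] at h2
    push_cast at h1
    linarith
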